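/- arXiv:2410.23871 — 9 statements merged into one kernel-verified Lean document; each statement's English description precedes it below -/
import Mathlib

section
/- Let X and Y be real Banach spaces, let F : X → Set Y be a set-valued mapping and let (x̄, ȳ) satisfy ȳ ∈ F x̄. Assume there are κ > 0 and α > 0 such that for every x ∈ closedBall(x̄, α) and every v ∈ F x one has ‖x − x̄‖ ≤ κ‖ȳ − v‖. Let μ > 0 satisfy κμ < 1 and let κ' > κ/(1 − κμ). Then for every β ∈ (0, α], every z̄ ∈ Y, and every set-valued mapping G : X → Set Y satisfying G x̄ = {z̄} and G x ⊆ {z̄ + w : ‖w‖ ≤ μ‖x − x̄‖} for every x ∈ closedBall(x̄, β), the mapping G + F is strongly metrically subregular at (x̄, ȳ + z̄) with constant κ' and neighborhood closedBall(x̄, β); that is, for every x ∈ closedBall(x̄, β) and every v ∈ (G + F)(x) one has ‖x − x̄‖ ≤ κ'‖(ȳ + z̄) − v‖. -/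
open Metric

/-!
A perturbation that moves the values by at most `μ * dist x' x` costs at most `κ * μ * dist x' x` in
the subregularity estimate; since `κ * μ < 1`, this term can be absorbed into the left-hand side,
which replaces `κ` by `κ / (1 - κ * μ)`.
-/

section

variable {X Y : Type*} [PseudoMetricSpace X]

/-- Strong metric subregularity of `F` at `(x, y)` with constant `κ` and neighborhood `s`. The
distance from `y` to the set `F x'` is replaced by the distances to its individual points, so that
an empty `F x'` imposes no condition. That `y ∈ F x` and that `s` is a neighborhood of `x` are not
part of the definition. -/
def IsStronglySubregularOn [PseudoMetricSpace Y] (F : X → Set Y) (x : X) (y : Y) (κ : ℝ)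
    (s : Set X) : Prop :=
  ∀ x' ∈ s, ∀ v ∈ F x', dist x' x ≤ κ * dist y v

/-- Isolated calmness of `G` at `(x, z)` with constant `μ` and neighborhood `s`, the condition under
which `G` is an admissible perturbation. All of `G x'` is constrained, not only its part near `z`.
That `z ∈ G x` and that `s` is a neighborhood of `x` are not part of the definition. -/
def IsIsolatedCalmOn [PseudoMetricSpace Y] (G : X → Set Y) (x : X) (z : Y) (μ : ℝ)
    (s : Set X) : Prop :=
  ∀ x' ∈ s, ∀ w ∈ G x', dist w z ≤ μ * dist x' x

theorem IsStronglySubregularOn.mono [PseudoMetricSpace Y] {F : X → Set Y} {x : X} {y : Y}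
    {κ : ℝ} {s t : Set X} (hF : IsStronglySubregularOn F x y κ t) (hst : s ⊆ t) :
    IsStronglySubregularOn F x y κ s :=
  fun x' hx' ↦ hF x' (hst hx')

theorem IsStronglySubregularOn.mono_const [PseudoMetricSpace Y] {F : X → Set Y} {x : X} {y : Y}
    {κ κ' : ℝ} {s : Set X} (hF : IsStronglySubregularOn F x y κ s) (hκ : κ ≤ κ') :
    IsStronglySubregularOn F x y κ' s := fun x' hx' v hv ↦
  (hF x' hx' v hv).trans (mul_le_mul_of_nonneg_right hκ dist_nonneg)

theorem isIsolatedCalmOn_of_subset_add [SeminormedAddCommGroup Y] {G : X → Set Y} {x : X} {z : Y}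
    {μ : ℝ} {s : Set X}
    (hG : ∀ x' ∈ s, G x' ⊆ {v | ∃ w : Y, ‖w‖ ≤ μ * dist x' x ∧ v = z + w}) :
    IsIsolatedCalmOn G x z μ s := by
  intro x' hx' v hv
  obtain ⟨w, hw, rfl⟩ := hG x' hx' hv
  rwa [dist_self_add_left]

theorem dist_le_dist_add_add_add_dist [SeminormedAddCommGroup Y] (y v z w : Y) :
    dist y v ≤ dist (y + z) (w + v) + dist w z :=
  calc
    dist y v = dist (y + z) (z + v) := by rw [add_comm z v, dist_add_right]
    _ ≤ dist (y + z) (w + v) + dist (w + v) (z + v) := dist_triangle _ _ _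
    _ = dist (y + z) (w + v) + dist w z := by rw [dist_add_right]

theorem le_div_one_sub_mul_of_le_mul_add {K : Type*} [Field K] [LinearOrder K]
    [IsStrictOrderedRing K] {a b κ μ : K} (hκμ : κ * μ < 1) (h : a ≤ κ * (b + μ * a)) :
    a ≤ κ / (1 - κ * μ) * b := by
  rw [div_mul_eq_mul_div, le_div_iff₀ (sub_pos.2 hκμ)]
  linarith

open scoped Pointwise in
theorem IsIsolatedCalmOn.add_isStronglySubregularOn [SeminormedAddCommGroup Y]
    {F G : X → Set Y} {x : X} {y z : Y} {κ μ : ℝ} {s : Set X}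
    (hG : IsIsolatedCalmOn G x z μ s) (hF : IsStronglySubregularOn F x y κ s)
    (hκ : 0 ≤ κ) (hκμ : κ * μ < 1) :
    IsStronglySubregularOn (G + F) x (y + z) (κ / (1 - κ * μ)) s := by
  rintro x' hx' _ ⟨w, hw, v, hv, rfl⟩
  apply le_div_one_sub_mul_of_le_mul_add hκμ
  calc
    dist x' x ≤ κ * dist y v := hF x' hx' v hv
    _ ≤ κ * (dist (y + z) (w + v) + dist w z) := by
      gcongr
      exact dist_le_dist_add_add_add_dist y v z w
    _ ≤ κ * (dist (y + z) (w + v) + μ * dist x' x) := by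
      gcongr
      exact hG x' hx' w hw

open scoped Pointwise in
theorem stmt_1_general [SeminormedAddCommGroup Y] {F G : X → Set Y} {x : X} {y z : Y}
    {κ κ' μ : ℝ} {s t : Set X} (hF : IsStronglySubregularOn F x y κ t)
    (hG : IsIsolatedCalmOn G x z μ s) (hst : s ⊆ t) (hκ : 0 ≤ κ) (hκμ : κ * μ < 1)
    (hκ' : κ / (1 - κ * μ) ≤ κ') :
    IsStronglySubregularOn (G + F) x (y + z) κ' s :=
  (hG.add_isStronglySubregularOn (hF.mono hst) hκ hκμ).mono_const hκ'

end

/-- Stability of strong metric subregularity at the reference point under set-valued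
perturbation (Proposition 4.2 / `propStability`). -/
theorem stmt_1 {X Y : Type*} [NormedAddCommGroup X] [NormedSpace ℝ X] [CompleteSpace X]
    [NormedAddCommGroup Y] [NormedSpace ℝ Y] [CompleteSpace Y]
    (F : X → Set Y) (xb : X) (yb : Y) (hxy : yb ∈ F xb)
    (κ α : ℝ) (hκ : 0 < κ) (hα : 0 < α)
    (hsub : ∀ x ∈ closedBall xb α, ∀ v ∈ F x, ‖x - xb‖ ≤ κ * ‖yb - v‖)
    (μ : ℝ) (hμ : 0 < μ) (hκμ : κ * μ < 1)
    (κ' : ℝ) (hκ' : κ / (1 - κ * μ) < κ') :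
    ∀ β, 0 < β → β ≤ α → ∀ zb : Y, ∀ G : X → Set Y,
      G xb = {zb} →
      (∀ x ∈ closedBall xb β, G x ⊆ {z | ∃ w : Y, ‖w‖ ≤ μ * ‖x - xb‖ ∧ z = zb + w}) →
      ∀ x ∈ closedBall xb β, ∀ w ∈ G x, ∀ v ∈ F x,
        ‖x - xb‖ ≤ κ' * ‖(yb + zb) - (w + v)‖ := by
  intro β _ hβα zb G _ hG x hx w hw v hv
  simp only [← dist_eq_norm] at hsub hG ⊢
  exact stmt_1_general hsub (isIsolatedCalmOn_of_subset_add hG) (closedBall_subset_closedBall hβα)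
    hκ.le hκμ hκ'.le x hx (w + v) (Set.add_mem_add hw hv)
end

section
/- Let P be a metric space, let X and Y be real Banach spaces, and let Ω ⊆ P × X be a compact set. Let F : X → Set Y be a set-valued mapping and let f : P × X → Y be continuous. For t ∈ P write G_t(x) := {f(t, x) + v : v ∈ F x}. Assume: (i) for each (t, x̄) ∈ Ω there exist a > 0, b > 0, κ > 0 such that for every (x, y) with y ∈ G_t(x), x ∈ closedBall(x̄, a), y ∈ closedBall(0, b), there exists r > 0 such that for every u ∈ closedBall(x, r) and every v ∈ G_t(u) with v ∈ closedBall(0, b) one has ‖u − x‖ ≤ κ‖y − v‖; (ii) for each (t, x̄) ∈ Ω and each μ > 0 there is α > 0 such that ‖f(s, u) − f(t, u) − (f(s, x) − f(t, x))‖ ≤ μ‖x − u‖ for all x, u ∈ closedBall(x̄, α) and all s ∈ closedBall(t, α). Then there exist positive constants a, b, κ such that for every (t, x̄) ∈ Ω and every (x, y) with y ∈ G_t(x), x ∈ closedBall(x̄, a), y ∈ closedBall(0, b), there exists r > 0 such that for every u ∈ closedBall(x, r) and every v ∈ G_t(u) with v ∈ closedBall(0, b) one has ‖u − x‖ ≤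 κ‖y − v‖. -/
open Metric

/-!
For `s` near `t`, write `G_s = (f (s, ·) - f (t, ·)) + G_t`: near `x₀` this perturbs `G_t` by a
small function with small Lipschitz constant `K`. If `G_t` has modulus `κ` and `κ * K < 1`, the
Lipschitz term can be absorbed, so `G_s` has modulus `κ / (1 - κ * K)` on neighborhoods that do not
depend on `s`. A single `ε` controls both radii (`ε`) and the modulus (`ε⁻¹`), so the local
statement holds for small `ε` near each point of `Ω`, and compactness makes `ε` uniform.
-/

open Filter Set
open scoped NNReal Pointwise Topology

section PseudoMetric

variable {X Y : Type*} [PseudoMetricSpace X] [PseudoMetricSpace Y]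

/-- `H` is strongly metrically subregular with modulus `κ` at every point of its graph in `A ×ˢ B`,
where `H u` is truncated to `B` at the nearby points `u`. The distance from `y` to `H u ∩ B` is
replaced by the distances from `y` to the elements of this set, which may be empty. -/
def StronglySubregularOn (H : X → Set Y) (A : Set X) (B : Set Y) (κ : ℝ) : Prop :=
  ∀ x ∈ A, ∀ y ∈ H x ∩ B, ∀ᶠ u in 𝓝 x, ∀ v ∈ H u ∩ B, dist u x ≤ κ * dist y v

theorem StronglySubregularOn.mono {H : X → Set Y} {A A' : Set X} {B B' : Set Y} {κ κ' : ℝ}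
    (h : StronglySubregularOn H A B κ) (hA : A' ⊆ A) (hB : B' ⊆ B) (hκ : κ ≤ κ') :
    StronglySubregularOn H A' B' κ' := by
  intro x hx y hy
  filter_upwards [h x (hA hx) y ⟨hy.1, hB hy.2⟩] with u hu v hv
  calc
    dist u x ≤ κ * dist y v := hu v ⟨hv.1, hB hv.2⟩
    _ ≤ κ' * dist y v := by gcongr

theorem tendsto_prod_nhds_of_eventually_lipschitzOnWith {P : Type*} {l : Filter P}
    {φ : P → X → Y} {K : ℝ≥0} {A : Set X} {x₀ : X} {y₀ : Y} (hA : A ∈ 𝓝 x₀)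
    (hlip : ∀ᶠ s in l, LipschitzOnWith K (φ s) A) (hφ : Tendsto (φ · x₀) l (𝓝 y₀)) :
    Tendsto (fun z : P × X ↦ φ z.1 z.2) (l ×ˢ 𝓝 x₀) (𝓝 y₀) := by
  have h_dist : Tendsto (fun z : P × X ↦ K * dist z.2 x₀ + dist (φ z.1 x₀) y₀)
      (l ×ˢ 𝓝 x₀) (𝓝 0) := by
    have hx : Tendsto (fun z : P × X ↦ dist z.2 x₀) (l ×ˢ 𝓝 x₀) (𝓝 0) :=
      tendsto_iff_dist_tendsto_zero.1 tendsto_snd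
    have hy := (tendsto_iff_dist_tendsto_zero.1 hφ).comp (tendsto_fst (g := 𝓝 x₀))
    simpa only [mul_zero, add_zero, Function.comp_apply] using (hx.const_mul (K : ℝ)).add hy
  refine tendsto_iff_dist_tendsto_zero.2 <|
    squeeze_zero' (Eventually.of_forall fun _ ↦ dist_nonneg) ?_ h_dist
  filter_upwards [hlip.prod_mk hA] with ⟨s, w⟩ ⟨hs, hw⟩
  calc
    dist (φ s w) y₀ ≤ dist (φ s w) (φ s x₀) + dist (φ s x₀) y₀ := dist_triangle _ _ _
    _ ≤ K * dist w x₀ + dist (φ s x₀) y₀ := by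
      gcongr
      exact hs.dist_le_mul w hw x₀ (mem_of_mem_nhds hA)

theorem eventually_prod_nhds_closedBall_subset {x₀ : X} {U : Set X} (hU : U ∈ 𝓝 x₀) :
    ∀ᶠ z : ℝ × X in 𝓝 0 ×ˢ 𝓝 x₀, closedBall z.2 z.1 ⊆ U := by
  have h_radius : Tendsto (fun z : ℝ × X ↦ z.1 + dist z.2 x₀) (𝓝 0 ×ˢ 𝓝 x₀) (𝓝 0) := by
    simpa only [add_zero] using
      tendsto_fst.add (tendsto_iff_dist_tendsto_zero.1 (tendsto_snd (f := 𝓝 (0 : ℝ))))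
  filter_upwards [h_radius.eventually (eventually_closedBall_subset hU)] with z hz
  exact (closedBall_subset_closedBall' le_rfl).trans hz

end PseudoMetric

section Perturbation

variable {X Y : Type*} [PseudoMetricSpace X] [SeminormedAddCommGroup Y]

theorem stronglySubregularOn_iff_norm {E : Type*} [SeminormedAddCommGroup E] {H : E → Set Y}
    {A : Set E} {B : Set Y} {κ : ℝ} :
    StronglySubregularOn H A B κ ↔
      ∀ x ∈ A, ∀ y ∈ H x, y ∈ B →
        ∃ r > 0, ∀ u ∈ closedBall x r, ∀ v ∈ H u, v ∈ B → ‖u - x‖ ≤ κ * ‖y - v‖ := by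
  simp only [StronglySubregularOn, nhds_basis_closedBall.eventually_iff, mem_inter_iff, and_imp,
    dist_eq_norm, gt_iff_lt]

theorem StronglySubregularOn.lipschitzOnWith_vadd {H : X → Set Y} {g : X → Y} {A : Set X}
    {B B' : Set Y} {κ : ℝ} {K : ℝ≥0} (hH : StronglySubregularOn H A B κ) (hA : IsOpen A)
    (hκ : 0 ≤ κ) (hκK : κ * K < 1) (hg : LipschitzOnWith K g A)
    (hB : ∀ x ∈ A, ∀ y ∈ B', y - g x ∈ B) :
    StronglySubregularOn (fun x ↦ g x +ᵥ H x) A B' (κ / (1 - κ * K)) := by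
  have sub_mem {w : X} (hw : w ∈ A) {z : Y} (hz : z ∈ (g w +ᵥ H w) ∩ B') :
      z - g w ∈ H w ∩ B := by
    refine ⟨?_, hB w hw z hz.2⟩
    simpa only [mem_vadd_set_iff_neg_vadd_mem, vadd_eq_add, neg_add_eq_sub] using hz.1
  intro x hx y hy
  filter_upwards [hH x hx _ (sub_mem hx hy), hA.mem_nhds hx] with u hu huA v hv
  have absorb : dist u x ≤ κ * dist y v + κ * K * dist u x := calc
    dist u x ≤ κ * dist (y - g x) (v - g u) := hu _ (sub_mem huA hv)
    _ ≤ κ * (dist y v + dist (g x) (g u)) := by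
      gcongr
      exact dist_sub_sub_le _ _ _ _
    _ ≤ κ * (dist y v + K * dist x u) := by
      gcongr
      exact hg.dist_le_mul x hx u huA
    _ = κ * dist y v + κ * K * dist u x := by rw [dist_comm x u]; ring
  rw [div_mul_eq_mul_div, le_div_iff₀ (sub_pos.2 hκK)]
  linarith

theorem StronglySubregularOn.eventually_closedBall_vadd {P : Type*} {l : Filter P}
    {H : X → Set Y} {φ : P → X → Y} {A : Set X} {B : Set Y} {x₀ : X} {κ : ℝ} {K : ℝ≥0}
    (hH : StronglySubregularOn H A B κ) (hA : A ∈ 𝓝 x₀) (hB : B ∈ 𝓝 0)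
    (hκ : 0 ≤ κ) (hκK : κ * K < 1)
    (hlip : ∀ᶠ s in l, LipschitzOnWith K (φ s) A) (hφ : Tendsto (φ · x₀) l (𝓝 0)) :
    ∀ᶠ z : ℝ × P × X in 𝓝[>] 0 ×ˢ (l ×ˢ 𝓝 x₀),
      StronglySubregularOn (fun x ↦ φ z.2.1 x +ᵥ H x)
        (closedBall z.2.2 z.1) (closedBall 0 z.1) z.1⁻¹ := by
  have h_sub : Tendsto (fun z : Y × P × X ↦ z.1 - φ z.2.1 z.2.2)
      (𝓝 0 ×ˢ (l ×ˢ 𝓝 x₀)) (𝓝 0) := by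
    simpa only [sub_zero, Function.comp_apply] using tendsto_fst.sub
      ((tendsto_prod_nhds_of_eventually_lipschitzOnWith hA hlip hφ).comp tendsto_snd)
  obtain ⟨B', hB', S, hS, h_sub_mem⟩ := mem_prod_iff.1 (h_sub hB)
  obtain ⟨V, hV, W, hW, hVW⟩ := mem_prod_iff.1 hS
  obtain ⟨U, hU, hU_open, hx₀U⟩ := _root_.mem_nhds_iff.1 (inter_mem hA hW)
  have h_dom : ∀ᶠ z : ℝ × P × X in 𝓝[>] 0 ×ˢ (l ×ˢ 𝓝 x₀), closedBall z.2.2 z.1 ⊆ U :=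
    ((tendsto_fst.mono_right nhdsWithin_le_nhds).prodMk (tendsto_snd.comp tendsto_snd)).eventually
      (eventually_prod_nhds_closedBall_subset (hU_open.mem_nhds hx₀U))
  have h_ran : ∀ᶠ ε in 𝓝[>] (0 : ℝ), closedBall (0 : Y) ε ⊆ B' :=
    nhdsWithin_le_nhds (eventually_closedBall_subset hB')
  have h_mod : ∀ᶠ ε in 𝓝[>] (0 : ℝ), κ / (1 - κ * K) ≤ ε⁻¹ :=
    tendsto_inv_nhdsGT_zero.eventually_ge_atTop _
  have h_param : ∀ᶠ q : P × X in l ×ˢ 𝓝 x₀, LipschitzOnWith K (φ q.1) A ∧ q.1 ∈ V :=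
    (hlip.and hV).prod_inl _
  filter_upwards [h_dom, (h_ran.and h_mod).prod_mk h_param]
    with ⟨ε, s, z⟩ hdom ⟨⟨hran, hmod⟩, hs, hsV⟩
  refine (StronglySubregularOn.lipschitzOnWith_vadd (B' := B')
    (hH.mono (fun _ hx ↦ (hU hx).1) Subset.rfl le_rfl) hU_open hκ hκK
    (hs.mono fun _ hx ↦ (hU hx).1) fun x hx y hy ↦ ?_).mono hdom hran hmod
  exact h_sub_mem (mk_mem_prod hy (hVW (mk_mem_prod hsV (hU hx).2)))

theorem exists_eventually_nhdsSet_stronglySubregularOn {P : Type*} [TopologicalSpace P]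
    {Ω : Set (P × X)} (hΩ : IsCompact Ω) {F : X → Set Y} {f : P × X → Y}
    (hf : ∀ p ∈ Ω, ContinuousAt (fun s ↦ f (s, p.2)) p.1)
    (h : ∀ p ∈ Ω, ∃ A ∈ 𝓝 p.2, ∃ B ∈ 𝓝 (0 : Y), ∃ κ ≥ (0 : ℝ), ∃ K : ℝ≥0, κ * K < 1 ∧
      StronglySubregularOn (fun x ↦ f (p.1, x) +ᵥ F x) A B κ ∧
      ∀ᶠ s in 𝓝 p.1, LipschitzOnWith K (fun x ↦ f (s, x) - f (p.1, x)) A) :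
    ∃ ε > 0, ∀ᶠ p in 𝓝ˢ Ω,
      StronglySubregularOn (fun x ↦ f (p.1, x) +ᵥ F x) (closedBall p.2 ε) (closedBall 0 ε) ε⁻¹ := by
  have local_unif : ∀ p ∈ Ω, ∀ᶠ z : ℝ × P × X in 𝓝[>] 0 ×ˢ 𝓝 p,
      StronglySubregularOn (fun x ↦ f (z.2.1, x) +ᵥ F x)
        (closedBall z.2.2 z.1) (closedBall 0 z.1) z.1⁻¹ := by
    rintro ⟨t, x₀⟩ hp
    obtain ⟨A, hA, B, hB, κ, hκ, K, hκK, hreg, hlip⟩ := h _ hp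
    have hφ : Tendsto (fun s ↦ f (s, x₀) - f (t, x₀)) (𝓝 t) (𝓝 0) :=
      tendsto_sub_nhds_zero_iff.2 (hf _ hp)
    simpa only [vadd_vadd, vadd_eq_add, sub_add_cancel, nhds_prod_eq] using
      hreg.eventually_closedBall_vadd hA hB hκ hκK hlip hφ
  have unif : ∀ᶠ ε in 𝓝[>] (0 : ℝ), ∀ᶠ p in 𝓝ˢ Ω,
      StronglySubregularOn (fun x ↦ f (p.1, x) +ᵥ F x)
        (closedBall p.2 ε) (closedBall 0 ε) ε⁻¹ :=
    Eventually.curry (hΩ.mem_prod_nhdsSet_of_forall local_unif)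
  obtain ⟨ε, hε, hε_pos⟩ := (unif.and self_mem_nhdsWithin).exists
  exact ⟨ε, hε_pos, hε⟩

end Perturbation

theorem stmt_2_general {P X Y : Type*} [PseudoMetricSpace P] [PseudoMetricSpace X]
    [SeminormedAddCommGroup Y] {Ω : Set (P × X)} (hΩ : IsCompact Ω) {F : X → Set Y} {f : P × X → Y}
    (hf : ∀ p ∈ Ω, ContinuousAt (fun s ↦ f (s, p.2)) p.1) {G : P → X → Set Y}
    (hG : ∀ t x, G t x = {z | ∃ v ∈ F x, z = f (t, x) + v})
    (hi : ∀ p ∈ Ω, ∃ a > 0, ∃ b > 0, ∃ κ > 0,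
      StronglySubregularOn (G p.1) (closedBall p.2 a) (closedBall 0 b) κ)
    (hii : ∀ p ∈ Ω, ∀ μ > 0, ∃ α > 0, ∀ x ∈ closedBall p.2 α, ∀ u ∈ closedBall p.2 α,
      ∀ s ∈ closedBall p.1 α,
        ‖f (s, u) - f (p.1, u) - (f (s, x) - f (p.1, x))‖ ≤ μ * dist x u) :
    ∃ a > 0, ∃ b > 0, ∃ κ > 0, ∀ᶠ p in 𝓝ˢ Ω,
      StronglySubregularOn (G p.1) (closedBall p.2 a) (closedBall 0 b) κ := by
  obtain rfl : G = fun t x ↦ f (t, x) +ᵥ F x := by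
    ext t x z
    simp only [hG, mem_ofPred_eq, mem_vadd_set, vadd_eq_add, eq_comm]
  suffices h : ∃ ε > 0, ∀ᶠ p in 𝓝ˢ Ω, StronglySubregularOn (fun x ↦ f (p.1, x) +ᵥ F x)
      (closedBall p.2 ε) (closedBall 0 ε) ε⁻¹ by
    obtain ⟨ε, hε, hreg⟩ := h
    exact ⟨ε, hε, ε, hε, ε⁻¹, inv_pos.2 hε, hreg⟩
  refine exists_eventually_nhdsSet_stronglySubregularOn hΩ hf fun p hp ↦ ?_
  obtain ⟨a, ha, b, hb, κ, hκ, hreg⟩ := hi p hp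
  obtain ⟨α, hα, hlip⟩ := hii p hp (2 * κ)⁻¹ (by positivity)
  have hκK : κ * Real.toNNReal (2 * κ)⁻¹ < 1 := by
    rw [Real.coe_toNNReal _ (by positivity)]
    field_simp
    norm_num
  refine ⟨closedBall p.2 (min a α), closedBall_mem_nhds _ (by positivity), closedBall 0 b,
    closedBall_mem_nhds _ hb, κ, hκ.le, Real.toNNReal (2 * κ)⁻¹, hκK,
    hreg.mono (closedBall_subset_closedBall (min_le_left _ _)) Subset.rfl le_rfl, ?_⟩
  filter_upwards [closedBall_mem_nhds p.1 hα] with s hs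
  refine LipschitzOnWith.mono (LipschitzOnWith.of_dist_le' fun u hu x hx ↦ ?_)
    (closedBall_subset_closedBall (min_le_right a α))
  simpa only [dist_eq_norm (f (s, u) - _), dist_comm x u] using hlip x hx u hu s hs

/-- Uniform strong metric subregularity around the reference points over a compact set
(Theorem 4.3 (iii) / `thmParametricStabilitySubregularity`). -/
theorem stmt_2 {P : Type*} [MetricSpace P]
    {X Y : Type*} [NormedAddCommGroup X] [NormedSpace ℝ X] [CompleteSpace X]
    [NormedAddCommGroup Y] [NormedSpace ℝ Y] [CompleteSpace Y]
    (Ω : Set (P × X)) (hΩ : IsCompact Ω)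
    (F : X → Set Y) (f : P × X → Y) (hf : Continuous f)
    (G : P → X → Set Y)
    (hG : ∀ t x, G t x = {z | ∃ v ∈ F x, z = f (t, x) + v})
    (hi : ∀ p ∈ Ω, ∃ a > 0, ∃ b > 0, ∃ κ > 0,
      ∀ x ∈ closedBall p.2 a, ∀ y ∈ G p.1 x, y ∈ closedBall (0 : Y) b →
        ∃ r > 0, ∀ u ∈ closedBall x r, ∀ v ∈ G p.1 u, v ∈ closedBall (0 : Y) b →
          ‖u - x‖ ≤ κ * ‖y - v‖)
    (hii : ∀ p ∈ Ω, ∀ μ > 0, ∃ α > 0, ∀ x ∈ closedBall p.2 α, ∀ u ∈ closedBall p.2 α,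
      ∀ s ∈ closedBall p.1 α,
        ‖f (s, u) - f (p.1, u) - (f (s, x) - f (p.1, x))‖ ≤ μ * ‖x - u‖) :
    ∃ a > 0, ∃ b > 0, ∃ κ > 0, ∀ p ∈ Ω,
      ∀ x ∈ closedBall p.2 a, ∀ y ∈ G p.1 x, y ∈ closedBall (0 : Y) b →
        ∃ r > 0, ∀ u ∈ closedBall x r, ∀ v ∈ G p.1 u, v ∈ closedBall (0 : Y) b →
          ‖u - x‖ ≤ κ * ‖y - v‖ := by
  simp only [← stronglySubregularOn_iff_norm] at hi ⊢
  obtain ⟨a, ha, b, hb, κ, hκ, h⟩ := stmt_2_general hΩ (fun p _ ↦ by fun_prop) hG hi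
    (by simpa only [dist_eq_norm] using hii)
  exact ⟨a, ha, b, hb, κ, hκ, h.self_of_nhdsSet⟩
end

section
/- Let T > 0, let X and Y be real Banach spaces, let F : X → Set Y be a set-valued mapping, let f : ℝ × X → Y be continuous, and let φ : [0, T] → X and p : [0, T] → Y be continuous mappings. For t ∈ [0, T] write G_t(x) := {f(t, x) + v : v ∈ F x}. Assume: (i) for each t ∈ [0, T] there exist a > 0, b > 0, κ > 0 such that for every (x, y) with y ∈ G_t(x), x ∈ closedBall(φ(t), a), y ∈ closedBall(p(t), b), there exists r > 0 such that for every u ∈ closedBall(x, r) and every v ∈ G_t(u) with v ∈ closedBall(p(t), b) one has ‖u − x‖ ≤ κ‖y − v‖; (ii) for each t ∈ [0, T] and each μ > 0 there is δ > 0 such that ‖f(s, u) − f(t, u) − (f(s, x) − f(t, x))‖ ≤ μ‖x − u‖ for all x, u ∈ closedBall(φ(t), δ) and all s ∈ [0, T] with |s − t| < δ. Then there exist positive constants a, b, κ such that for every t ∈ [0, T] and every (x, y) with y ∈ G_t(x), x ∈ closedBall(φ(t), a), y ∈ closedBall(p(t), b), there exists r > 0 such that for every u ∈ closedBall(x, r)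 and every v ∈ G_t(u) with v ∈ closedBall(p(t), b) one has ‖u − x‖ ≤ κ‖y − v‖. -/
open Metric

/-! Replacing `f t` by a nearby `f s` perturbs `G t` by a map with small Lipschitz constant. Strong
subregularity survives such a perturbation, on neighbourhoods whose size does not depend on `s`;
by continuity of `φ`, `p` and `f`, these neighbourhoods can be recentred at `(φ s, p s)`. The
constants obtained at `t` thus serve all `s` near `t`, and compactness makes them uniform. -/

open scoped NNReal Pointwise Topology

/-- `G` is strongly metrically subregular with constant `κ` at each point of its graph in
`closedBall x₀ a ×ˢ closedBall y₀ b`. The radius `r` may depend on the point, while the images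
are always truncated to the same ball `closedBall y₀ b`. -/
def StronglySubregularWith {X Y : Type*} [PseudoMetricSpace X] [PseudoMetricSpace Y]
    (a b κ : ℝ) (G : X → Set Y) (x₀ : X) (y₀ : Y) : Prop :=
  ∀ x ∈ closedBall x₀ a, ∀ y ∈ G x, y ∈ closedBall y₀ b →
    ∃ r > 0, ∀ u ∈ closedBall x r, ∀ v ∈ G u, v ∈ closedBall y₀ b → dist u x ≤ κ * dist y v

/-- The mappings `G t`, `t ∈ S`, are strongly metrically subregular around `(φ t, p t)` with
radii and constant independent of `t`. -/
def UniformlyStronglySubregularOn {Θ X Y : Type*} [PseudoMetricSpace X] [PseudoMetricSpace Y]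
    (G : Θ → X → Set Y) (φ : Θ → X) (p : Θ → Y) (S : Set Θ) : Prop :=
  ∃ a > 0, ∃ b > 0, ∃ κ > 0, ∀ t ∈ S, StronglySubregularWith a b κ (G t) (φ t) (p t)

section PseudoMetricSpace

variable {Θ X Y : Type*} [PseudoMetricSpace X] [PseudoMetricSpace Y]

theorem StronglySubregularWith.mono {a b κ a' b' κ' : ℝ} {G : X → Set Y} {x₀ x₁ : X} {y₀ y₁ : Y}
    (h : StronglySubregularWith a b κ G x₀ y₀) (hx : closedBall x₁ a' ⊆ closedBall x₀ a)
    (hy : closedBall y₁ b' ⊆ closedBall y₀ b) (hκ : κ ≤ κ') :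
    StronglySubregularWith a' b' κ' G x₁ y₁ := by
  intro x hxa y hyG hyb
  obtain ⟨r, hr, hsub⟩ := h x (hx hxa) y hyG (hy hyb)
  refine ⟨r, hr, fun u hu v hvG hvb => ?_⟩
  calc dist u x ≤ κ * dist y v := hsub u hu v hvG (hy hvb)
    _ ≤ κ' * dist y v := by gcongr

namespace UniformlyStronglySubregularOn

variable {G : Θ → X → Set Y} {φ : Θ → X} {p : Θ → Y} {S S' : Set Θ}

theorem mono (h : UniformlyStronglySubregularOn G φ p S') (hS : S ⊆ S') :
    UniformlyStronglySubregularOn G φ p S := by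
  obtain ⟨a, ha, b, hb, κ, hκ, hsub⟩ := h
  exact ⟨a, ha, b, hb, κ, hκ, fun t ht => hsub t (hS ht)⟩

theorem union (h : UniformlyStronglySubregularOn G φ p S)
    (h' : UniformlyStronglySubregularOn G φ p S') :
    UniformlyStronglySubregularOn G φ p (S ∪ S') := by
  obtain ⟨a, ha, b, hb, κ, hκ, hsub⟩ := h
  obtain ⟨a', ha', b', hb', κ', _, hsub'⟩ := h'
  refine ⟨min a a', lt_min ha ha', min b b', lt_min hb hb', max κ κ', lt_max_of_lt_left hκ, ?_⟩
  rintro t (ht | ht)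
  · exact (hsub t ht).mono (closedBall_subset_closedBall (min_le_left _ _))
      (closedBall_subset_closedBall (min_le_left _ _)) (le_max_left _ _)
  · exact (hsub' t ht).mono (closedBall_subset_closedBall (min_le_right _ _))
      (closedBall_subset_closedBall (min_le_right _ _)) (le_max_right _ _)

theorem of_isCompact [TopologicalSpace Θ] {K : Set Θ} (hK : IsCompact K)
    (h : ∀ t ∈ K, ∃ U ∈ 𝓝[K] t, UniformlyStronglySubregularOn G φ p U) :
    UniformlyStronglySubregularOn G φ p K :=
  hK.induction_on ⟨1, one_pos, 1, one_pos, 1, one_pos, fun _ ht => ht.elim⟩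
    (fun _ _ hS h' => h'.mono hS) (fun _ _ => union) h

end UniformlyStronglySubregularOn

end PseudoMetricSpace

section Perturbation

variable {Θ X Y : Type*} [PseudoMetricSpace X] [SeminormedAddCommGroup Y]

theorem StronglySubregularWith.vadd_lipschitzOnWith {a a' b κ : ℝ} {μ : ℝ≥0} {G : X → Set Y}
    {h : X → Y} {x₀ : X} {y₀ : Y} (hG : StronglySubregularWith a b κ G x₀ y₀)
    (hh : LipschitzOnWith μ h (closedBall x₀ a)) (hκ : 0 ≤ κ) (hκμ : κ * μ < 1) (ha : a' < a) :
    StronglySubregularWith a' (b - μ * a) (κ / (1 - κ * μ)) (fun x => h x +ᵥ G x)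
      x₀ (h x₀ + y₀) := by
  have unshift_mem {z : X} (hz : z ∈ closedBall x₀ a) {w : Y}
      (hw : h z + w ∈ closedBall (h x₀ + y₀) (b - μ * a)) : w ∈ closedBall y₀ b := by
    have hx₀ : x₀ ∈ closedBall x₀ a := mem_closedBall_self (dist_nonneg.trans hz)
    calc dist w y₀ = ‖(h z + w - (h x₀ + y₀)) - (h z - h x₀)‖ := by
          rw [dist_eq_norm]; congr 1; abel
      _ ≤ dist (h z + w) (h x₀ + y₀) + dist (h z) (h x₀) := by
          simpa only [dist_eq_norm] using norm_sub_le _ _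
      _ ≤ (b - μ * a) + μ * a :=
          add_le_add hw ((hh.dist_le_mul z hz x₀ hx₀).trans (by gcongr; exact hz))
      _ = b := sub_add_cancel _ _
  rintro x hx _ ⟨y, hy, rfl⟩ hyb
  have hxa : x ∈ closedBall x₀ a := closedBall_subset_closedBall ha.le hx
  obtain ⟨r, hr, hsub⟩ := hG x hxa y hy (unshift_mem hxa hyb)
  refine ⟨min r (a - a'), lt_min hr (sub_pos.2 ha), ?_⟩
  rintro u hu _ ⟨v, hv, rfl⟩ hvb
  have hua : u ∈ closedBall x₀ a :=
    closedBall_subset_closedBall' (by linarith [min_le_right r (a - a'), mem_closedBall.1 hx]) hu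
  have hdist : dist u x ≤ κ * (dist (h x + y) (h u + v) + μ * dist u x) :=
    calc dist u x ≤ κ * dist y v := hsub u (closedBall_subset_closedBall (min_le_left _ _) hu)
          v hv (unshift_mem hua hvb)
      _ = κ * ‖(h x + y - (h u + v)) + (h u - h x)‖ := by
          rw [dist_eq_norm]; congr 2; abel
      _ ≤ κ * (dist (h x + y) (h u + v) + dist (h u) (h x)) := by
          simp only [dist_eq_norm]; gcongr; exact norm_add_le _ _
      _ ≤ κ * (dist (h x + y) (h u + v) + μ * dist u x) := by
          gcongr; exact hh.dist_le_mul u hua x hxa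
  simp only [vadd_eq_add]
  rw [div_mul_eq_mul_div, le_div_iff₀ (sub_pos.2 hκμ)]
  linarith

theorem exists_mem_nhdsWithin_uniformlyStronglySubregularOn [TopologicalSpace Θ] {K : Set Θ}
    {t : Θ} {F : X → Set Y} {f : Θ → X → Y} {φ : Θ → X} {p : Θ → Y}
    (hf : ContinuousWithinAt (fun s => f s (φ t)) K t) (hφ : ContinuousWithinAt φ K t)
    (hp : ContinuousWithinAt p K t)
    (hsub : ∃ a > 0, ∃ b > 0, ∃ κ > 0,
      StronglySubregularWith a b κ (fun x => f t x +ᵥ F x) (φ t) (p t))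
    (hlip : ∀ μ : ℝ≥0, 0 < μ →
      ∃ δ > 0, ∀ᶠ s in 𝓝[K] t, LipschitzOnWith μ (f s - f t) (closedBall (φ t) δ)) :
    ∃ U ∈ 𝓝[K] t, UniformlyStronglySubregularOn (fun s x => f s x +ᵥ F x) φ p U := by
  obtain ⟨a, ha, b, hb, κ, hκ, hsub⟩ := hsub
  obtain ⟨μ, hμ, hκμ⟩ := exists_pos_mul_lt one_pos κ
  lift μ to ℝ≥0 using hμ.le
  obtain ⟨δ, hδ, hlip⟩ := hlip μ hμ
  obtain ⟨ε, hε, hμε⟩ := exists_pos_mul_lt (half_pos hb) (μ : ℝ)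
  obtain ⟨c, hc, hca, hcδ, hμc⟩ : ∃ c > 0, c ≤ a ∧ c ≤ δ ∧ μ * c ≤ b / 2 :=
    ⟨min (min a δ) ε, by positivity, (min_le_left _ _).trans (min_le_left _ _),
      (min_le_left _ _).trans (min_le_right _ _),
      (mul_le_mul_of_nonneg_left (min_le_right _ _) hμ.le).trans hμε.le⟩
  have hφ_near : ∀ᶠ s in 𝓝[K] t, dist (φ s) (φ t) < c / 4 :=
    hφ.eventually (ball_mem_nhds _ (by positivity))
  have hp_near : ∀ᶠ s in 𝓝[K] t, dist (p s) ((f s - f t) (φ t) + p t) < b / 4 := by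
    have hcont : ContinuousWithinAt (fun s => dist (p s) ((f s - f t) (φ t) + p t)) K t :=
      hp.dist ((hf.sub continuousWithinAt_const).add continuousWithinAt_const)
    exact hcont.eventually_lt continuousWithinAt_const (by simpa using hb)
  refine ⟨_, hφ_near.and (hp_near.and hlip), c / 4, by positivity, b / 4, by positivity,
    κ / (1 - κ * μ), div_pos hκ (sub_pos.2 hκμ), ?_⟩
  rintro s ⟨hφs, hps, hlips⟩
  have hsub_c : StronglySubregularWith c b κ (fun x => f t x +ᵥ F x) (φ t) (p t) :=
    hsub.mono (closedBall_subset_closedBall hca) subset_rfl le_rfl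
  have hsub_s : StronglySubregularWith (c / 2) (b - μ * c) (κ / (1 - κ * μ))
      (fun x => f s x +ᵥ F x) (φ t) ((f s - f t) (φ t) + p t) := by
    simpa only [vadd_vadd, vadd_eq_add, Pi.sub_apply, sub_add_cancel] using
      hsub_c.vadd_lipschitzOnWith (hlips.mono (closedBall_subset_closedBall hcδ)) hκ.le hκμ
        (half_lt_self hc)
  exact hsub_s.mono (closedBall_subset_closedBall' (by linarith))
    (closedBall_subset_closedBall' (by linarith)) le_rfl

theorem stmt_5_general [TopologicalSpace Θ] {K : Set Θ} (hK : IsCompact K)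
    {F : X → Set Y} {f : Θ → X → Y} {φ : Θ → X} {p : Θ → Y}
    (hf : ∀ t ∈ K, ContinuousWithinAt (fun s => f s (φ t)) K t) (hφ : ContinuousOn φ K)
    (hp : ContinuousOn p K)
    (hsub : ∀ t ∈ K, ∃ a > 0, ∃ b > 0, ∃ κ > 0,
      StronglySubregularWith a b κ (fun x => f t x +ᵥ F x) (φ t) (p t))
    (hlip : ∀ t ∈ K, ∀ μ : ℝ≥0, 0 < μ →
      ∃ δ > 0, ∀ᶠ s in 𝓝[K] t, LipschitzOnWith μ (f s - f t) (closedBall (φ t) δ)) :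
    UniformlyStronglySubregularOn (fun t x => f t x +ᵥ F x) φ p K :=
  .of_isCompact hK fun t ht => exists_mem_nhdsWithin_uniformlyStronglySubregularOn
    (hf t ht) (hφ t ht) (hp t ht) (hsub t ht) (hlip t ht)

end Perturbation

/-- Uniform strong metric subregularity around the points of a continuous path
(Theorem 4.5 (iii) / `thmStabilitySubreg`). -/
theorem stmt_5 {X Y : Type*} [NormedAddCommGroup X] [NormedSpace ℝ X] [CompleteSpace X]
    [NormedAddCommGroup Y] [NormedSpace ℝ Y] [CompleteSpace Y]
    (T : ℝ) (hT : 0 < T)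
    (F : X → Set Y) (f : ℝ × X → Y) (hf : Continuous f)
    (φ : ℝ → X) (hφ : ContinuousOn φ (Set.Icc 0 T))
    (p : ℝ → Y) (hp : ContinuousOn p (Set.Icc 0 T))
    (G : ℝ → X → Set Y)
    (hG : ∀ t x, G t x = {z | ∃ v ∈ F x, z = f (t, x) + v})
    (hi : ∀ t ∈ Set.Icc (0 : ℝ) T, ∃ a > 0, ∃ b > 0, ∃ κ > 0,
      ∀ x ∈ closedBall (φ t) a, ∀ y ∈ G t x, y ∈ closedBall (p t) b →
        ∃ r > 0, ∀ u ∈ closedBall x r, ∀ v ∈ G t u, v ∈ closedBall (p t) b →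
          ‖u - x‖ ≤ κ * ‖y - v‖)
    (hii : ∀ t ∈ Set.Icc (0 : ℝ) T, ∀ μ > 0, ∃ δ > 0,
      ∀ x ∈ closedBall (φ t) δ, ∀ u ∈ closedBall (φ t) δ,
        ∀ s ∈ Set.Icc (0 : ℝ) T, |s - t| < δ →
          ‖f (s, u) - f (t, u) - (f (s, x) - f (t, x))‖ ≤ μ * ‖x - u‖) :
    ∃ a > 0, ∃ b > 0, ∃ κ > 0, ∀ t ∈ Set.Icc (0 : ℝ) T,
      ∀ x ∈ closedBall (φ t) a, ∀ y ∈ G t x, y ∈ closedBall (p t) b →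
        ∃ r > 0, ∀ u ∈ closedBall x r, ∀ v ∈ G t u, v ∈ closedBall (p t) b →
          ‖u - x‖ ≤ κ * ‖y - v‖ := by
  obtain rfl : G = fun t x => f (t, x) +ᵥ F x := by
    ext t x z
    simp only [hG, Set.mem_ofPred_eq, Set.mem_vadd_set, vadd_eq_add, eq_comm]
  have hlip : ∀ t ∈ Set.Icc 0 T, ∀ μ : ℝ≥0, 0 < μ → ∃ δ > 0, ∀ᶠ s in 𝓝[Set.Icc 0 T] t,
      LipschitzOnWith μ ((fun x => f (s, x)) - fun x => f (t, x)) (closedBall (φ t) δ) := by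
    intro t ht μ hμ
    obtain ⟨δ, hδ, hfδ⟩ := hii t ht μ hμ
    refine ⟨δ, hδ, ?_⟩
    filter_upwards [self_mem_nhdsWithin, mem_nhdsWithin_of_mem_nhds (ball_mem_nhds t hδ)]
      with s hs hst
    refine .of_dist_le_mul fun u hu x hx => ?_
    simpa only [dist_eq_norm, norm_sub_rev u x, Pi.sub_apply] using hfδ x hx u hu s hs hst
  simpa only [UniformlyStronglySubregularOn, StronglySubregularWith, dist_eq_norm] using
    stmt_5_general isCompact_Icc (fun t _ => by fun_prop) hφ hp
      (by simpa only [StronglySubregularWith, dist_eq_norm] using hi) hlip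
end

section
/- Let n be a natural number, let f : EuclideanSpace ℝ (Fin n) → EuclideanSpace ℝ (Fin n), let x̄ be a point, and let ε > 0 and δ > 0 be constants. Assume f is differentiable at every point of closedBall(x̄, δ) and that for each x ∈ closedBall(x̄, δ) one has ‖f x − f x̄ − (Df x)(x − x̄)‖ ≤ ε‖x − x̄‖, where Df x denotes the Fréchet derivative of f at x. Then for each x ∈ closedBall(x̄, δ) and each y* ∈ EuclideanSpace ℝ (Fin n), setting x* := (Df x)† y* (the Hilbert-space adjoint of Df x applied to y*), one has |⟨x*, x − x̄⟩ − ⟨y*, f x − f x̄⟩| ≤ ε · max{‖x*‖, ‖y*‖} · max{‖x − x̄‖, ‖f x − f x̄‖}. -/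
open Metric
open scoped RealInnerProductSpace

section HilbertSpace

variable {𝕜 E F : Type*} [RCLike 𝕜]
  [NormedAddCommGroup E] [InnerProductSpace 𝕜 E] [CompleteSpace E]
  [NormedAddCommGroup F] [InnerProductSpace 𝕜 F] [CompleteSpace F]

theorem norm_inner_adjoint_sub_inner_le (A : E →L[𝕜] F) (u : E) (v y : F) :
    ‖inner 𝕜 (A.adjoint y) u - inner 𝕜 y v‖ ≤ ‖y‖ * ‖v - A u‖ := by
  rw [ContinuousLinearMap.adjoint_inner_left, ← inner_sub_right, norm_sub_rev v]
  exact norm_inner_le_norm y (A u - v)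

theorem stmt_7_general {f : E → F} {A : E → E →L[𝕜] F} {s : Set E} {xb : E} {ε : ℝ}
    (hε : 0 ≤ ε) (happrox : ∀ x ∈ s, ‖f x - f xb - A x (x - xb)‖ ≤ ε * ‖x - xb‖) :
    ∀ x ∈ s, ∀ ys : F,
      ‖inner 𝕜 ((A x).adjoint ys) (x - xb) - inner 𝕜 ys (f x - f xb)‖ ≤
        ε * max ‖(A x).adjoint ys‖ ‖ys‖ * max ‖x - xb‖ ‖f x - f xb‖ := by
  intro x hx ys
  calc ‖inner 𝕜 ((A x).adjoint ys) (x - xb) - inner 𝕜 ys (f x - f xb)‖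
      ≤ ‖ys‖ * ‖f x - f xb - A x (x - xb)‖ := norm_inner_adjoint_sub_inner_le _ _ _ _
    _ ≤ ‖ys‖ * (ε * ‖x - xb‖) := by gcongr; exact happrox x hx
    _ = ε * ‖ys‖ * ‖x - xb‖ := by ring
    _ ≤ ε * max ‖(A x).adjoint ys‖ ‖ys‖ * max ‖x - xb‖ ‖f x - f xb‖ := by
      gcongr
      · exact le_max_right _ _
      · exact le_max_left _ _

end HilbertSpace

/-- Semismooth*-type estimate for a differentiable single-valued map
(Lemma 3.1 / `lemContinousDifSemismooth`). -/
theorem stmt_7 (n : ℕ) (f : EuclideanSpace ℝ (Fin n) → EuclideanSpace ℝ (Fin n))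
    (xb : EuclideanSpace ℝ (Fin n)) (ε δ : ℝ) (hε : 0 < ε) (hδ : 0 < δ)
    (hdiff : ∀ x ∈ closedBall xb δ, DifferentiableAt ℝ f x)
    (happrox : ∀ x ∈ closedBall xb δ,
      ‖f x - f xb - fderiv ℝ f x (x - xb)‖ ≤ ε * ‖x - xb‖) :
    ∀ x ∈ closedBall xb δ, ∀ ys : EuclideanSpace ℝ (Fin n),
      |⟪(fderiv ℝ f x).adjoint ys, x - xb⟫ - ⟪ys, f x - f xb⟫| ≤
        ε * max ‖(fderiv ℝ f x).adjoint ys‖ ‖ys‖ * max ‖x - xb‖ ‖f x - f xb‖ :=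
  stmt_7_general hε.le happrox
end

section
/- Let n be a natural number, let K ⊆ EuclideanSpace ℝ (Fin n) be a compact set, let α > 0, and let f : EuclideanSpace ℝ (Fin n) → EuclideanSpace ℝ (Fin n) be continuously differentiable on an open set containing {y : dist(y, K) ≤ α}. Then for every ε > 0 there exists δ ∈ (0, α) such that for every ȳ ∈ K and every y ∈ closedBall(ȳ, δ) and every x* ∈ EuclideanSpace ℝ (Fin n), setting y* := (Df y)† x* (the Hilbert-space adjoint of the Fréchet derivative of f at y applied to x*), one has |⟨x*, f y − f ȳ⟩ − ⟨y*, y − ȳ⟩| ≤ ε · max{‖x*‖, ‖y*‖} · max{‖f y − f ȳ‖, ‖y − ȳ‖}. -/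
open Metric
open scoped RealInnerProductSpace

/-!
A `C¹` map is strictly differentiable and its derivative is continuous, so at each point of `K` the
first-order expansion with the derivative taken at the *moving* point `y` has error
`o(‖y - x‖)` as `(y, x)` tends to the diagonal. The diagonal of `K` is compact, which makes the
radius uniform. Since `⟪Df(y)† u, y - x⟫ = ⟪u, Df(y) (y - x)⟫`, the quantity to be estimated is the
pairing of this error with `u`, and Cauchy-Schwarz finishes.
-/

open Filter Topology Asymptotics

theorem eventually_forall_mem_closedBall_of_eventually_nhds_diag {X : Type*}
    [PseudoMetricSpace X] {K : Set X} (hK : IsCompact K) {p : X → X → Prop}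
    (hp : ∀ x ∈ K, ∀ᶠ q : X × X in 𝓝 (x, x), p q.1 q.2) :
    ∀ᶠ δ in 𝓝[>] (0 : ℝ), ∀ x ∈ K, ∀ y ∈ closedBall x δ, p y x := by
  have hdiag : IsCompact ((fun x => (x, x)) '' K) := hK.image (by fun_prop)
  have hsub : (fun x => (x, x)) '' K ⊆ interior {q : X × X | p q.1 q.2} :=
    Set.image_subset_iff.2 fun x hx => mem_interior_iff_mem_nhds.2 (hp x hx)
  obtain ⟨r, hr, hrp⟩ := hdiag.exists_cthickening_subset_open isOpen_interior hsub
  filter_upwards [Ioc_mem_nhdsGT hr] with δ hδ x hx y hy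
  have hmem : (y, x) ∈ closedBall (x, x) r := by
    simpa [Prod.dist_eq, hr.le] using (mem_closedBall.1 hy).trans hδ.2
  have hyx : (y, x) ∈ {q : X × X | p q.1 q.2} := interior_subset <|
    hrp (closedBall_subset_cthickening (Set.mem_image_of_mem _ hx) r hmem)
  exact hyx

theorem isLittleO_sub_sub_fderiv_fst {𝕜 E F : Type*} [NontriviallyNormedField 𝕜]
    [NormedAddCommGroup E] [NormedSpace 𝕜 E] [NormedAddCommGroup F] [NormedSpace 𝕜 F]
    {f : E → F} {x : E} (hf : HasStrictFDerivAt f (fderiv 𝕜 f x) x)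
    (hf' : ContinuousAt (fderiv 𝕜 f) x) :
    (fun q : E × E => f q.1 - f q.2 - fderiv 𝕜 f q.1 (q.1 - q.2)) =o[𝓝 (x, x)]
      fun q => q.1 - q.2 := by
  have hderiv : (fun q : E × E => (fderiv 𝕜 f q.1 - fderiv 𝕜 f x) (q.1 - q.2)) =o[𝓝 (x, x)]
      fun q => q.1 - q.2 := by
    refine isLittleO_iff.2 fun c hc => ?_
    have hclose : ∀ᶠ q : E × E in 𝓝 (x, x), dist (fderiv 𝕜 f q.1) (fderiv 𝕜 f x) < c :=
      (hf'.eventually (ball_mem_nhds _ hc)).prod_inl_nhds x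
    filter_upwards [hclose] with q hq
    exact ContinuousLinearMap.le_of_opNorm_le _ ((dist_eq_norm _ _).symm.trans_le hq.le) _
  refine (hf.isLittleO.sub hderiv).congr_left fun q => ?_
  rw [sub_apply]
  abel

theorem eventually_forall_norm_sub_sub_fderiv_le {𝕜 E F : Type*} [RCLike 𝕜]
    [NormedAddCommGroup E] [NormedSpace 𝕜 E] [NormedAddCommGroup F] [NormedSpace 𝕜 F]
    {K : Set E} (hK : IsCompact K) {f : E → F}
    (hf : ∀ x ∈ K, ContDiffAt 𝕜 1 f x) {ε : ℝ} (hε : 0 < ε) :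
    ∀ᶠ δ in 𝓝[>] (0 : ℝ), ∀ x ∈ K, ∀ y ∈ closedBall x δ,
      ‖f y - f x - fderiv 𝕜 f y (y - x)‖ ≤ ε * ‖y - x‖ := by
  refine eventually_forall_mem_closedBall_of_eventually_nhds_diag
    (p := fun y x => ‖f y - f x - fderiv 𝕜 f y (y - x)‖ ≤ ε * ‖y - x‖) hK fun x hx => ?_
  have hcont : ContinuousAt (fderiv 𝕜 f) x :=
    ((hf x hx).fderiv_right (m := 0) (zero_add 1).le).continuousAt
  exact (isLittleO_sub_sub_fderiv_fst
    ((hf x hx).hasStrictFDerivAt one_ne_zero) hcont).bound hε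

section Adjoint

variable {𝕜 E F : Type*} [RCLike 𝕜]
  [NormedAddCommGroup E] [InnerProductSpace 𝕜 E] [CompleteSpace E]
  [NormedAddCommGroup F] [InnerProductSpace 𝕜 F] [CompleteSpace F]

theorem norm_inner_sub_inner_adjoint_le (A : E →L[𝕜] F) (u w : F) (v : E) :
    ‖inner 𝕜 u w - inner 𝕜 (A.adjoint u) v‖ ≤ ‖u‖ * ‖w - A v‖ := by
  rw [A.adjoint_inner_left, ← inner_sub_right]
  exact norm_inner_le_norm _ _

theorem stmt_8_general {K : Set E} (hK : IsCompact K) {f : E → F}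
    (hf : ∀ x ∈ K, ContDiffAt 𝕜 1 f x) {ε : ℝ} (hε : 0 < ε) :
    ∀ᶠ δ in 𝓝[>] (0 : ℝ), ∀ x ∈ K, ∀ y ∈ closedBall x δ, ∀ u : F,
      ‖inner 𝕜 u (f y - f x) - inner 𝕜 ((fderiv 𝕜 f y).adjoint u) (y - x)‖ ≤
        ε * max ‖u‖ ‖(fderiv 𝕜 f y).adjoint u‖ * max ‖f y - f x‖ ‖y - x‖ := by
  filter_upwards [eventually_forall_norm_sub_sub_fderiv_le hK hf hε] with δ hδ x hx y hy u
  calc ‖inner 𝕜 u (f y - f x) - inner 𝕜 ((fderiv 𝕜 f y).adjoint u) (y - x)‖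
      ≤ ‖u‖ * ‖f y - f x - fderiv 𝕜 f y (y - x)‖ := norm_inner_sub_inner_adjoint_le ..
    _ ≤ ‖u‖ * (ε * ‖y - x‖) := by gcongr; exact hδ x hx y hy
    _ = ε * ‖u‖ * ‖y - x‖ := by ring
    _ ≤ ε * max ‖u‖ ‖(fderiv 𝕜 f y).adjoint u‖ * max ‖f y - f x‖ ‖y - x‖ := by
      gcongr
      exacts [le_max_left .., le_max_right ..]

end Adjoint

/-- Uniform semismooth*-type estimate along a compact set for a C¹ localization
(Proposition 3.6 / `proInverseSmooth`). -/
theorem stmt_8 (n : ℕ) (K : Set (EuclideanSpace ℝ (Fin n))) (hK : IsCompact K)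
    (α : ℝ) (hα : 0 < α)
    (f : EuclideanSpace ℝ (Fin n) → EuclideanSpace ℝ (Fin n))
    (U : Set (EuclideanSpace ℝ (Fin n))) (hU : IsOpen U)
    (hKU : {y | infDist y K ≤ α} ⊆ U) (hf : ContDiffOn ℝ 1 f U) :
    ∀ ε > 0, ∃ δ, 0 < δ ∧ δ < α ∧ ∀ gb ∈ K, ∀ y ∈ closedBall gb δ,
      ∀ xs : EuclideanSpace ℝ (Fin n),
        |⟪xs, f y - f gb⟫ - ⟪(fderiv ℝ f y).adjoint xs, y - gb⟫| ≤
          ε * max ‖xs‖ ‖(fderiv ℝ f y).adjoint xs‖ * max ‖f y - f gb‖ ‖y - gb‖ := by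
  intro ε hε
  have hfK : ∀ x ∈ K, ContDiffAt ℝ 1 f x := fun x hx =>
    hf.contDiffAt (hU.mem_nhds (hKU ((infDist_zero_of_mem hx).trans_le hα.le)))
  obtain ⟨δ, hest, hδ, hδα⟩ :=
    ((stmt_8_general hK hfK hε).and (Ioo_mem_nhdsGT hα)).exists
  exact ⟨δ, hδ, hδα, hest⟩
end

section
/- Let n be a natural number and let F : EuclideanSpace ℝ (Fin n) → Set (EuclideanSpace ℝ (Fin n)) be a set-valued mapping whose graph gph F is closed and convex. For (x, y) ∈ gph F define N(x, y) := {(x*, y*) : ⟨x*, u − x⟩ − ⟨y*, z − y⟩ ≤ 0 for all (u, z) ∈ gph F}. Let W ⊆ gph F and δ > 0 be such that for every (x, y) ∈ gph F for which there exists (w₁, w₂) ∈ W with max{‖x − w₁‖, ‖y − w₂‖} ≤ δ, membership (x*, y*) ∈ N(x, y) implies (−x*, −y*) ∈ N(x, y). Then for every ε > 0, every (x̄, ȳ) ∈ W, every (x, y) ∈ gph F with ‖x − x̄‖ ≤ δ and ‖y − ȳ‖ ≤ δ, and every (x*, y*) ∈ N(x, y), one has |⟨x*, x − x̄⟩ −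 ⟨y*, y − ȳ⟩| ≤ ε · max{‖x*‖, ‖y*‖} · max{‖x − x̄‖, ‖y − ȳ‖}. -/
open Metric
open scoped RealInnerProductSpace

section Coderivative

variable {E E' : Type*} [SeminormedAddCommGroup E] [InnerProductSpace ℝ E]
  [SeminormedAddCommGroup E'] [InnerProductSpace ℝ E'] {F : E → Set E'}

/-- The graph of the coderivative of `F` at `(x, y)` in the sense of convex analysis, cut out by
the global normal inequality. Its points are the pairs `(x*, y*)` such that `(x*, -y*)` is normal
to the graph of `F` at `(x, y)`, hence the minus sign of the second pairing. -/
def coderivativeGraph (F : E → Set E') (x : E) (y : E') : Set (E × E') :=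
  {q | ∀ u z, z ∈ F u → ⟪q.1, u - x⟫ - ⟪q.2, z - y⟫ ≤ 0}

theorem inner_sub_inner_nonneg_of_mem_coderivativeGraph {x u : E} {y z : E'} {q : E × E'}
    (hq : q ∈ coderivativeGraph F x y) (hz : z ∈ F u) :
    0 ≤ ⟪q.1, x - u⟫ - ⟪q.2, y - z⟫ := by
  have h := hq u z hz
  rw [← neg_sub x u, ← neg_sub y z, inner_neg_right, inner_neg_right] at h
  linarith

theorem inner_sub_inner_eq_zero_of_neg_mem_coderivativeGraph {x u : E} {y z : E'} {q : E × E'}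
    (hq : q ∈ coderivativeGraph F x y) (hq_neg : -q ∈ coderivativeGraph F x y) (hz : z ∈ F u) :
    ⟪q.1, x - u⟫ - ⟪q.2, y - z⟫ = 0 := by
  have h_nonneg := inner_sub_inner_nonneg_of_mem_coderivativeGraph hq hz
  have h_neg_nonneg := inner_sub_inner_nonneg_of_mem_coderivativeGraph hq_neg hz
  rw [Prod.fst_neg, Prod.snd_neg, inner_neg_left, inner_neg_left] at h_neg_nonneg
  linarith

theorem stmt_10_general {W : Set (E × E')} (hW : W ⊆ {p | p.2 ∈ F p.1}) {δ : ℝ}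
    (hsym : ∀ x y, y ∈ F x → (∃ w ∈ W, max ‖x - w.1‖ ‖y - w.2‖ ≤ δ) →
      ∀ q ∈ coderivativeGraph F x y, -q ∈ coderivativeGraph F x y) :
    ∀ w ∈ W, ∀ x y, y ∈ F x → ‖x - w.1‖ ≤ δ → ‖y - w.2‖ ≤ δ →
      ∀ q ∈ coderivativeGraph F x y, ⟪q.1, x - w.1⟫ - ⟪q.2, y - w.2⟫ = 0 :=
  fun w hw x y hy hx_le hy_le q hq =>
    inner_sub_inner_eq_zero_of_neg_mem_coderivativeGraph hq
      (hsym x y hy ⟨w, hw, max_le hx_le hy_le⟩ q hq) (hW hw)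

end Coderivative

/-- A mapping with closed convex graph whose coderivative graph is symmetric near `W` is
uniformly semismooth* on `W` (Theorem 3.8). -/
theorem stmt_10 (n : ℕ)
    (F : EuclideanSpace ℝ (Fin n) → Set (EuclideanSpace ℝ (Fin n)))
    (hclosed : IsClosed {p : EuclideanSpace ℝ (Fin n) × EuclideanSpace ℝ (Fin n) | p.2 ∈ F p.1})
    (hconvex : Convex ℝ {p : EuclideanSpace ℝ (Fin n) × EuclideanSpace ℝ (Fin n) | p.2 ∈ F p.1})
    (N : EuclideanSpace ℝ (Fin n) → EuclideanSpace ℝ (Fin n) →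
      Set (EuclideanSpace ℝ (Fin n) × EuclideanSpace ℝ (Fin n)))
    (hN : ∀ x y, N x y =
      {q | ∀ u z, z ∈ F u → ⟪q.1, u - x⟫ - ⟪q.2, z - y⟫ ≤ 0})
    (W : Set (EuclideanSpace ℝ (Fin n) × EuclideanSpace ℝ (Fin n)))
    (hW : W ⊆ {p | p.2 ∈ F p.1}) (δ : ℝ) (hδ : 0 < δ)
    (hsym : ∀ x y, y ∈ F x → (∃ w ∈ W, max ‖x - w.1‖ ‖y - w.2‖ ≤ δ) →
      ∀ q ∈ N x y, (-q.1, -q.2) ∈ N x y) :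
    ∀ ε > 0, ∀ w ∈ W, ∀ x y, y ∈ F x → ‖x - w.1‖ ≤ δ → ‖y - w.2‖ ≤ δ →
      ∀ q ∈ N x y,
        |⟪q.1, x - w.1⟫ - ⟪q.2, y - w.2⟫| ≤
          ε * max ‖q.1‖ ‖q.2‖ * max ‖x - w.1‖ ‖y - w.2‖ := by
  obtain rfl : N = coderivativeGraph F := funext₂ hN
  intro ε hε w hw x y hy hx_le hy_le q hq
  rw [stmt_10_general hW hsym w hw x y hy hx_le hy_le q hq, abs_zero]
  positivity
end

section
/- Let n be a natural number, let T > 0, let f : ℝ × EuclideanSpace ℝ (Fin n) → EuclideanSpace ℝ (Fin n) be continuously differentiable, and let x : [0, T] → EuclideanSpace ℝ (Fin n) be continuous. Then for every ε > 0 there exist ε̂ > 0 and δ > 0 such that for every t ∈ [0, T], every x ∈ closedBall(x(t), δ), every y ∈ closedBall(0, δ), and all w*, y* ∈ EuclideanSpace ℝ (Fin n) satisfying |⟨w*, x − x(t)⟩ − ⟨y*, (y − f(t, x)) + f(t, x(t))⟩| ≤ ε̂ · max{‖w*‖, ‖y*‖} · max{‖x − x(t)‖, ‖(y − f(t, x))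 + f(t, x(t))‖}, the vector x* := w* + (D_x f(t, x))† y* satisfies |⟨x*, x − x(t)⟩ − ⟨y*, y⟩| ≤ ε · max{‖x*‖, ‖y*‖} · max{‖x − x(t)‖, ‖y‖}, where D_x f(t, x) is the partial Fréchet derivative of f with respect to the second variable and † denotes the Hilbert-space adjoint. -/
open Metric
open scoped RealInnerProductSpace

/-!
By compactness, the partial derivative `f' t u` is bounded, and close to `f' t (x t)`, uniformly in
the parameter `t` as `u → x t`. Hence `d = f t u - f t (x t)` differs from `f' t u (u - x t)` by a
small multiple of `‖u - x t‖`. Since `⟪(f' t u)† y*, u - x t⟫ = ⟪y*, f' t u (u - x t)⟫`, passing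
from `(w*, v)` to `(w* + (f' t u)† y*, v + d)` changes the left-hand side of the semismooth*
inequality by no more than this linearization error, and the norms on its right-hand side by
bounded factors.
-/

section UniformLinearization

open Set

variable {Θ E F : Type*} [TopologicalSpace Θ]

lemma exists_closedBall_dist_le_of_continuousOn [SeminormedAddCommGroup E] [PseudoMetricSpace F]
    {K : Set Θ} (hK : IsCompact K) {g : Θ → E → F} (hg : ContinuousOn ↿g (K ×ˢ univ))
    {x : Θ → E} (hx : ContinuousOn x K) {ε : ℝ} (hε : 0 < ε) :
    ∃ δ > 0, ∀ t ∈ K, ∀ u ∈ closedBall (x t) δ, dist (g t u) (g t (x t)) ≤ ε := by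
  have translate_cont :
      ContinuousOn (Function.uncurry fun h t => g t (x t + h)) (univ ×ˢ K) :=
    hg.comp (f := fun p : E × Θ => (p.2, x p.2 + p.1))
      (continuousOn_snd.prodMk
        ((hx.comp continuousOn_snd fun p hp => hp.2).add continuousOn_fst))
      fun p hp => ⟨hp.2, mem_univ _⟩
  obtain ⟨V, hV, dist_lt⟩ :=
    hK.mem_uniformity_of_prod translate_cont (mem_univ 0) (dist_mem_uniformity hε)
  rw [nhdsWithin_univ] at hV
  obtain ⟨δ, hδ, ball_subset⟩ := nhds_basis_closedBall.mem_iff.1 hV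
  refine ⟨δ, hδ, fun t ht u hu => ?_⟩
  have hmem : u - x t ∈ V := ball_subset (by simpa [dist_eq_norm] using hu)
  have hdist : dist (g t (x t + (u - x t))) (g t (x t + 0)) < ε := dist_lt _ hmem t ht
  simpa only [add_sub_cancel, add_zero] using hdist.le

variable [NormedAddCommGroup E] [NormedSpace ℝ E] [NormedAddCommGroup F] [NormedSpace ℝ F]

lemma norm_fderiv_apply_sub_sub_le {f : E → F} {f' : E → E →L[ℝ] F} {s : Set E}
    (hs : Convex ℝ s) (hf : ∀ z ∈ s, HasFDerivWithinAt f (f' z) s z) {A : E →L[ℝ] F} {η : ℝ}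
    (hA : ∀ z ∈ s, dist (f' z) A ≤ η) {x u : E} (hx : x ∈ s) (hu : u ∈ s) :
    ‖f' u (u - x) - (f u - f x)‖ ≤ 2 * η * ‖u - x‖ := by
  rw [norm_sub_rev]
  refine hs.norm_image_sub_le_of_norm_hasFDerivWithin_le' hf (fun z hz => ?_) hx hu
  rw [← dist_eq_norm]
  linarith [dist_triangle_right (f' z) (f' u) A, hA z hz, hA u hu]

lemma exists_closedBall_norm_fderiv_le_and_norm_sub_le {K : Set Θ} (hK : IsCompact K)
    {f : Θ → E → F} {f' : Θ → E → E →L[ℝ] F} (hf : ∀ t ∈ K, ∀ z, HasFDerivAt (f t) (f' t z) z)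
    (hf' : ContinuousOn ↿f' (K ×ˢ univ)) {x : Θ → E} (hx : ContinuousOn x K) {η : ℝ}
    (hη : 0 < η) :
    ∃ L ≥ 0, ∃ δ > 0, ∀ t ∈ K, ∀ u ∈ closedBall (x t) δ,
      ‖f' t u‖ ≤ L ∧ ‖f' t u (u - x t) - (f t u - f t (x t))‖ ≤ η * ‖u - x t‖ := by
  have path_cont : ContinuousOn (fun t => f' t (x t)) K :=
    hf'.comp (continuousOn_id.prodMk hx) fun t ht => ⟨ht, mem_univ _⟩
  obtain ⟨L, hL⟩ := hK.exists_bound_of_continuousOn path_cont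
  obtain ⟨δ, hδ, dist_le⟩ := exists_closedBall_dist_le_of_continuousOn hK hf' hx (half_pos hη)
  refine ⟨max (L + η / 2) 0, le_max_right _ _, δ, hδ, fun t ht u hu => ⟨?_, ?_⟩⟩
  · have := norm_le_norm_add_norm_sub' (f' t u) (f' t (x t))
    rw [← dist_eq_norm] at this
    exact le_max_of_le_left (by linarith [hL t ht, dist_le t ht u hu])
  · simpa only [mul_div_cancel₀ η two_ne_zero] using
      norm_fderiv_apply_sub_sub_le (convex_closedBall (x t) δ)
        (fun z _ => (hf t ht z).hasFDerivWithinAt) (dist_le t ht) (mem_closedBall_self hδ.le) hu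

end UniformLinearization

lemma max_norm_le_mul_max_norm_add {E F : Type*} [SeminormedAddCommGroup E]
    [SeminormedAddCommGroup F] {a : E} {b d : F} {C : ℝ} (hC : 0 ≤ C) (hd : ‖d‖ ≤ C * ‖a‖) :
    max ‖a‖ ‖b‖ ≤ (1 + C) * max ‖a‖ ‖b + d‖ := by
  have ha : ‖a‖ ≤ max ‖a‖ ‖b + d‖ := le_max_left _ _
  have hbd : ‖b + d‖ ≤ max ‖a‖ ‖b + d‖ := le_max_right _ _
  have hCa := mul_le_mul_of_nonneg_left ha hC
  have hb : ‖b‖ ≤ ‖b + d‖ + ‖d‖ := norm_le_add_norm_add b d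
  exact max_le (by linarith [mul_nonneg hC (norm_nonneg a)]) (by linarith)

section SemismoothStar

variable {E F : Type*} [NormedAddCommGroup E] [InnerProductSpace ℝ E]
  [NormedAddCommGroup F] [InnerProductSpace ℝ F]

/-- The semismooth* inequality with constant `c` for a coderivative pair `(ys, xs)` of a set-valued
map at a point of its graph whose displacement from the reference point is `(u, v)`. -/
def SemismoothStarIneq (c : ℝ) (xs : E) (ys : F) (u : E) (v : F) : Prop :=
  |⟪xs, u⟫ - ⟪ys, v⟫| ≤ c * max ‖xs‖ ‖ys‖ * max ‖u‖ ‖v‖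

variable [CompleteSpace E] [CompleteSpace F]

lemma inner_add_adjoint_sub_inner_add (A : E →L[ℝ] F) (ws u : E) (ys v d : F) :
    ⟪ws + A.adjoint ys, u⟫ - ⟪ys, v + d⟫ = (⟪ws, u⟫ - ⟪ys, v⟫) + ⟪ys, A u - d⟫ := by
  rw [inner_add_left, ContinuousLinearMap.adjoint_inner_left, inner_add_right, inner_sub_right]
  ring

lemma SemismoothStarIneq.add_adjoint {A : E →L[ℝ] F} {c L η : ℝ} {ws u : E} {ys v d : F}
    (h : SemismoothStarIneq c ws ys u v) (hc : 0 ≤ c) (hη : 0 ≤ η) (hA : ‖A‖ ≤ L)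
    (hd : ‖A u - d‖ ≤ η * ‖u‖) :
    SemismoothStarIneq (c * (1 + L) * (1 + (L + η)) + η) (ws + A.adjoint ys) ys u (v + d) := by
  have hL : 0 ≤ L := (norm_nonneg A).trans hA
  have adjoint_le : ‖A.adjoint ys‖ ≤ L * ‖ys‖ :=
    ContinuousLinearMap.le_of_opNorm_le _ (by rwa [LinearIsometryEquiv.norm_map]) ys
  have increment_le : ‖d‖ ≤ (L + η) * ‖u‖ := by
    linarith [norm_le_norm_add_norm_sub (A u) d, A.le_of_opNorm_le hA u]
  have dual_le : max ‖ws‖ ‖ys‖ ≤ (1 + L) * max ‖ws + A.adjoint ys‖ ‖ys‖ := by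
    simpa only [max_comm] using max_norm_le_mul_max_norm_add (b := ws) hL adjoint_le
  have primal_le : max ‖u‖ ‖v‖ ≤ (1 + (L + η)) * max ‖u‖ ‖v + d‖ :=
    max_norm_le_mul_max_norm_add (add_nonneg hL hη) increment_le
  have error_le :
      |⟪ys, A u - d⟫| ≤ max ‖ws + A.adjoint ys‖ ‖ys‖ * (η * max ‖u‖ ‖v + d‖) :=
    (abs_real_inner_le_norm _ _).trans <| by
      gcongr
      · exact le_max_right _ _
      · exact hd.trans (by gcongr; exact le_max_left _ _)
  rw [SemismoothStarIneq, inner_add_adjoint_sub_inner_add]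
  calc |(⟪ws, u⟫ - ⟪ys, v⟫) + ⟪ys, A u - d⟫|
      ≤ |⟪ws, u⟫ - ⟪ys, v⟫| + |⟪ys, A u - d⟫| := abs_add_le _ _
    _ ≤ c * max ‖ws‖ ‖ys‖ * max ‖u‖ ‖v‖ +
          max ‖ws + A.adjoint ys‖ ‖ys‖ * (η * max ‖u‖ ‖v + d‖) := add_le_add h error_le
    _ ≤ c * ((1 + L) * max ‖ws + A.adjoint ys‖ ‖ys‖) * ((1 + (L + η)) * max ‖u‖ ‖v + d‖) +
          max ‖ws + A.adjoint ys‖ ‖ys‖ * (η * max ‖u‖ ‖v + d‖) := by gcongr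
    _ = _ := by ring

theorem stmt_11_general {Θ : Type*} [TopologicalSpace Θ] {K : Set Θ} (hK : IsCompact K)
    {f : Θ → E → F} {f' : Θ → E → E →L[ℝ] F} (hf : ∀ t ∈ K, ∀ z, HasFDerivAt (f t) (f' t z) z)
    (hf' : ContinuousOn ↿f' (K ×ˢ Set.univ)) {x : Θ → E} (hx : ContinuousOn x K) {ε : ℝ}
    (hε : 0 < ε) :
    ∃ c > 0, ∃ δ > 0, ∀ t ∈ K, ∀ u ∈ closedBall (x t) δ, ∀ (y : F) (ws : E) (ys : F),
      SemismoothStarIneq c ws ys (u - x t) (y - f t u + f t (x t)) →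
        SemismoothStarIneq ε (ws + (f' t u).adjoint ys) ys (u - x t) y := by
  obtain ⟨L, hL, δ, hδ, linearization⟩ :=
    exists_closedBall_norm_fderiv_le_and_norm_sub_le hK hf hf' hx (half_pos hε)
  obtain ⟨c, hc, hcε⟩ : ∃ c > 0, c * (1 + L) * (1 + (L + ε / 2)) + ε / 2 = ε :=
    ⟨ε / 2 / ((1 + L) * (1 + (L + ε / 2))), by positivity, by field_simp; ring⟩
  refine ⟨c, hc, δ, hδ, fun t ht u hu y ws ys h => ?_⟩
  obtain ⟨norm_le, error_le⟩ := linearization t ht u hu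
  have h_sum := h.add_adjoint hc.le (half_pos hε).le norm_le error_le
  have hy : y - f t u + f t (x t) + (f t u - f t (x t)) = y := by abel
  rwa [hcε, hy] at h_sum

end SemismoothStar

section PartialDerivative

variable {P E F : Type*} [NormedAddCommGroup P] [NormedSpace ℝ P] [NormedAddCommGroup E]
  [NormedSpace ℝ E] [NormedAddCommGroup F] [NormedSpace ℝ F] {f : P × E → F}

lemma hasFDerivAt_partial_snd (hf : Differentiable ℝ f) (t : P) (z : E) :
    HasFDerivAt (fun z => f (t, z)) (fderiv ℝ (fun z => f (t, z)) z) z :=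
  (hf.comp (differentiable_const t |>.prodMk differentiable_id) z).hasFDerivAt

lemma continuous_fderiv_partial_snd (hf : ContDiff ℝ 1 f) :
    Continuous fun p : P × E => fderiv ℝ (fun z => f (p.1, z)) p.2 :=
  (ContDiff.fderiv (n := 0) (f := fun (p : P × E) z => f (p.1, z))
    (hf.comp (contDiff_fst.fst.prodMk contDiff_snd)) contDiff_snd (by simp)).continuous

end PartialDerivative

/-- Stability of uniform semismoothness* under continuously differentiable perturbation
along a continuous path (Theorem 3.9), in coderivative-pair form. -/
theorem stmt_11 (n : ℕ) (T : ℝ) (hT : 0 < T)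
    (f : ℝ × EuclideanSpace ℝ (Fin n) → EuclideanSpace ℝ (Fin n))
    (hf : ContDiff ℝ 1 f)
    (x : ℝ → EuclideanSpace ℝ (Fin n)) (hx : ContinuousOn x (Set.Icc 0 T)) :
    ∀ ε > 0, ∃ εh > 0, ∃ δ > 0, ∀ t ∈ Set.Icc (0 : ℝ) T,
      ∀ u ∈ closedBall (x t) δ, ∀ y ∈ closedBall (0 : EuclideanSpace ℝ (Fin n)) δ,
        ∀ ws ys : EuclideanSpace ℝ (Fin n),
          |⟪ws, u - x t⟫ - ⟪ys, (y - f (t, u)) + f (t, x t)⟫| ≤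
            εh * max ‖ws‖ ‖ys‖ * max ‖u - x t‖ ‖(y - f (t, u)) + f (t, x t)‖ →
          |⟪ws + (fderiv ℝ (fun z => f (t, z)) u).adjoint ys, u - x t⟫ - ⟪ys, y⟫| ≤
            ε * max ‖ws + (fderiv ℝ (fun z => f (t, z)) u).adjoint ys‖ ‖ys‖ *
              max ‖u - x t‖ ‖y‖ := by
  intro ε hε
  obtain ⟨εh, hεh, δ, hδ, perturb⟩ := stmt_11_general isCompact_Icc
    (fun t _ => hasFDerivAt_partial_snd (hf.differentiable one_ne_zero) t)
    (continuous_fderiv_partial_snd hf).continuousOn hx hε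
  exact ⟨εh, hεh, δ, hδ, fun t ht u hu y _ => perturb t ht u hu y⟩
end

section
/- Let n be a positive natural number, let A, B : Matrix (Fin n) (Fin n) ℝ with A invertible, let u, x̄, y ∈ EuclideanSpace ℝ (Fin n), let ε ≥ 0, and set M := max{‖u − x̄‖, ‖y‖}. Assume that for each index i one has |(A.mulVec (u − x̄) − B.mulVec y) i| ≤ ε · sqrt(∑_j (A i j)² + ∑_j (B i j)²) · M. Then ‖u − A⁻¹.mulVec (B.mulVec y) − x̄‖ ≤ ε · ‖A⁻¹‖ · ‖(A | B)‖_F · M, where ‖A⁻¹‖ is the operator norm of A⁻¹ acting on EuclideanSpace ℝ (Fin n) and ‖(A | B)‖_F := sqrt(∑_{i,j} (A i j)² + ∑_{i,j} (B i j)²) is the Frobenius norm of the horizontal concatenation of A and B. -/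
/-!
Since `A` is invertible, the error `u - A⁻¹ b - x` of the Newton iterate is `A⁻¹` applied to the
residual `A (u - x) - b`. Bounding each residual entry by `c` times the norm of the corresponding
row of `(A | B)` and summing the squares bounds the residual by `c ‖(A | B)‖_F`; the operator norm
of `A⁻¹` transfers this to the error.
-/

open Metric

section NewtonStep

open Matrix WithLp

lemma norm_le_mul_sqrt_sum_of_forall_norm_le {ι : Type*} [Fintype ι] {β : ι → Type*}
    [∀ i, SeminormedAddCommGroup (β i)] {x : PiLp 2 β} {w : ι → ℝ} {c : ℝ}
    (hc : 0 ≤ c) (hw : ∀ i, 0 ≤ w i) (hx : ∀ i, ‖x i‖ ≤ c * √(w i)) :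
    ‖x‖ ≤ c * √(∑ i, w i) := by
  refine le_of_sq_le_sq ?_ (by positivity)
  calc ‖x‖ ^ 2 = ∑ i, ‖x i‖ ^ 2 := PiLp.norm_sq_eq_of_L2 β x
    _ ≤ ∑ i, (c * √(w i)) ^ 2 := by gcongr with i; exact hx i
    _ = c ^ 2 * ∑ i, w i := by simp only [mul_pow, Real.sq_sqrt (hw _), Finset.mul_sum]
    _ = (c * √(∑ i, w i)) ^ 2 := by
      rw [mul_pow, Real.sq_sqrt (Finset.sum_nonneg fun i _ => hw i)]

lemma sub_inv_mulVec_sub_eq_inv_mulVec {ι R : Type*} [Fintype ι] [DecidableEq ι] [CommRing R]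
    {A : Matrix ι ι R} (hA : IsUnit A.det) (u x b : ι → R) :
    u - A⁻¹ *ᵥ b - x = A⁻¹ *ᵥ (A *ᵥ (u - x) - b) := by
  rw [mulVec_sub, mulVec_mulVec, nonsing_inv_mul A hA, one_mulVec, sub_right_comm]

variable {𝕜 ι κ : Type*} [RCLike 𝕜] [Fintype ι] [DecidableEq ι] [Fintype κ]

lemma norm_sub_inv_mulVec_sub_le {A : Matrix ι ι 𝕜} (hA : IsUnit A.det)
    (u x : EuclideanSpace 𝕜 ι) (b : ι → 𝕜) :
    ‖u - toLp 2 (A⁻¹ *ᵥ b) - x‖ ≤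
      ‖toEuclideanCLM (𝕜 := 𝕜) A⁻¹‖ * ‖toLp 2 (A *ᵥ (u - x) - b)‖ := by
  have error_eq : u - toLp 2 (A⁻¹ *ᵥ b) - x =
      toEuclideanCLM (𝕜 := 𝕜) A⁻¹ (toLp 2 (A *ᵥ (u - x) - b)) :=
    congrArg (toLp 2) (sub_inv_mulVec_sub_eq_inv_mulVec hA (ofLp u) (ofLp x) b)
  rw [error_eq]
  exact ContinuousLinearMap.le_opNorm _ _

theorem stmt_12_general {A : Matrix ι ι 𝕜} (hA : IsUnit A.det) (B : Matrix ι κ 𝕜)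
    (u x : EuclideanSpace 𝕜 ι) (y : EuclideanSpace 𝕜 κ) {c : ℝ} (hc : 0 ≤ c)
    (hrow : ∀ i, ‖(A *ᵥ (u - x) - B *ᵥ y) i‖ ≤ c * √(∑ j, ‖A i j‖ ^ 2 + ∑ j, ‖B i j‖ ^ 2)) :
    ‖u - toLp 2 (A⁻¹ *ᵥ (B *ᵥ y)) - x‖ ≤
      c * ‖toEuclideanCLM (𝕜 := 𝕜) A⁻¹‖ *
        √(∑ i, ∑ j, ‖A i j‖ ^ 2 + ∑ i, ∑ j, ‖B i j‖ ^ 2) := by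
  have residual_le : ‖toLp 2 (A *ᵥ (u - x) - B *ᵥ y)‖ ≤
      c * √(∑ i, ∑ j, ‖A i j‖ ^ 2 + ∑ i, ∑ j, ‖B i j‖ ^ 2) := by
    rw [← Finset.sum_add_distrib]
    exact norm_le_mul_sqrt_sum_of_forall_norm_le hc (fun i => by positivity) hrow
  calc ‖u - toLp 2 (A⁻¹ *ᵥ (B *ᵥ y)) - x‖
      ≤ ‖toEuclideanCLM (𝕜 := 𝕜) A⁻¹‖ * ‖toLp 2 (A *ᵥ (u - x) - B *ᵥ y)‖ :=
        norm_sub_inv_mulVec_sub_le hA u x (B *ᵥ y)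
    _ ≤ ‖toEuclideanCLM (𝕜 := 𝕜) A⁻¹‖ *
          (c * √(∑ i, ∑ j, ‖A i j‖ ^ 2 + ∑ i, ∑ j, ‖B i j‖ ^ 2)) := by gcongr
    _ = _ := by ring

end NewtonStep

/-- Linear-algebraic core of the Newton-step estimate (Lemma 5.1 / `lemMatrices`). -/
theorem stmt_12 (n : ℕ) (hn : 0 < n) (A B : Matrix (Fin n) (Fin n) ℝ)
    (hA : IsUnit A.det)
    (u xb y : EuclideanSpace ℝ (Fin n)) (ε : ℝ) (hε : 0 ≤ ε)
    (M : ℝ) (hM : M = max ‖u - xb‖ ‖y‖)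
    (hrow : ∀ i, |(A.mulVec (u - xb) - B.mulVec y) i| ≤
      ε * Real.sqrt ((∑ j, (A i j) ^ 2) + (∑ j, (B i j) ^ 2)) * M) :
    ‖u - (WithLp.equiv 2 (Fin n → ℝ)).symm (A⁻¹.mulVec (B.mulVec y)) - xb‖ ≤
      ε * ‖Matrix.toEuclideanCLM (𝕜 := ℝ) A⁻¹‖ *
        Real.sqrt ((∑ i, ∑ j, (A i j) ^ 2) + (∑ i, ∑ j, (B i j) ^ 2)) * M := by
  have hM_nonneg : 0 ≤ M := hM ▸ le_max_of_le_right (norm_nonneg y)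
  simpa [mul_right_comm _ _ M] using stmt_12_general hA B u xb y (mul_nonneg hε hM_nonneg)
    (by simpa only [Real.norm_eq_abs, sq_abs, mul_right_comm _ M] using hrow)
end

section
/- Let n be a natural number, let λ > 0, δ > 0, ℓ_g ≥ 0, ℓ_s ≥ 0, let F : EuclideanSpace ℝ (Fin n) → Set (EuclideanSpace ℝ (Fin n)) be a set-valued mapping, let g : EuclideanSpace ℝ (Fin n) → EuclideanSpace ℝ (Fin n), let q, x̄ ∈ EuclideanSpace ℝ (Fin n), and let s : EuclideanSpace ℝ (Fin n) → EuclideanSpace ℝ (Fin n). Set w̄ := x̄ − λ·g(x̄) + λ·q. Assume: g is Lipschitz with constant ℓ_g on closedBall(x̄, δ); s(w̄) = x̄; s is Lipschitz with constant ℓ_s on closedBall(w̄, (1 + λℓ_g)δ); and s is a selection of (I + λF)⁻¹ on that ball, i.e. for every w ∈ closedBall(w̄, (1 + λℓ_g)δ) one has (w − s(w))/λ ∈ F(s(w)). Then there exists η > 0 such that for every x ∈ closedBall(x̄, δ), setting d̂ := s(x − λ·g(x) + λ·q), one has: (a) (1/λ)(x − d̂) − g(x) + q ∈ F(d̂); and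 (b) max{‖x − x̄‖, ‖d̂ − x̄‖, (1/λ)‖x − d̂‖, ‖x − d̂‖} ≤ η‖x − x̄‖. -/
open Metric

/-!
The selection `s` of the resolvent inverts `I + lam • F` exactly, so membership in `F` at
`d = s (x - lam • g x + lam • q)` is an algebraic rearrangement. The forward step
`x ↦ x - lam • g x + lam • q` expands distances to `xb` by at most `1 + lam * ℓg`, hence it stays
where `s` is controlled, and `d` lies within `K * ‖x - xb‖` of `xb` with `K = ℓs * (1 + lam * ℓg)`.
The triangle inequality through `xb` bounds `‖x - d‖` by `(1 + K) * ‖x - xb‖`.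
-/

section Algebra

variable {𝕜 E : Type*} [DivisionRing 𝕜] [AddCommGroup E] [Module 𝕜 E]

/-- The forward (explicit) half of a forward-backward splitting step of size `lam` for the
inclusion `q ∈ g x + F x`; the backward half applies the resolvent of `F`. -/
def forwardStep (g : E → E) (q : E) (lam : 𝕜) (x : E) : E :=
  x - lam • g x + lam • q

/-- `s` is a selection on `W` of the resolvent `(I + lam • F)⁻¹`. For `lam ≠ 0` the relation
`w ∈ s w + lam • F (s w)` is encoded after solving for the element of `F (s w)`. -/
def IsResolventSelectionOn (F : E → Set E) (lam : 𝕜) (s : E → E) (W : Set E) : Prop :=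
  ∀ w ∈ W, (1 / lam) • (w - s w) ∈ F (s w)

theorem one_div_smul_forwardStep_sub (g : E → E) (q x d : E) {lam : 𝕜} (hlam : lam ≠ 0) :
    (1 / lam) • (forwardStep g q lam x - d) = (1 / lam) • (x - d) - g x + q := by
  have hsplit : forwardStep g q lam x - d = (x - d) - lam • (g x - q) := by
    rw [forwardStep, smul_sub]; abel
  rw [hsplit, smul_sub _ (x - d), smul_smul, one_div_mul_cancel hlam, one_smul, sub_sub_eq_add_sub,
    add_sub_right_comm]

theorem IsResolventSelectionOn.residual_mem {F : E → Set E} {lam : 𝕜} {s : E → E} {W : Set E}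
    (hs : IsResolventSelectionOn F lam s W) (hlam : lam ≠ 0) {g : E → E} {q x : E}
    (hx : forwardStep g q lam x ∈ W) :
    (1 / lam) • (x - s (forwardStep g q lam x)) - g x + q ∈ F (s (forwardStep g q lam x)) := by
  rw [← one_div_smul_forwardStep_sub g q x _ hlam]
  exact hs _ hx

end Algebra

section Norm

variable {E : Type*} [SeminormedAddCommGroup E]

theorem max_norm_sub_le_of_norm_sub_le {x d xb : E} {K : ℝ} (c : ℝ)
    (hd : ‖d - xb‖ ≤ K * ‖x - xb‖) :
    max (max ‖x - xb‖ ‖d - xb‖) (max (c * ‖x - d‖) ‖x - d‖) ≤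
      max 1 c * (1 + K) * ‖x - xb‖ := by
  have hK : 0 ≤ K * ‖x - xb‖ := (norm_nonneg _).trans hd
  have hxd : ‖x - d‖ ≤ (1 + K) * ‖x - xb‖ := by
    have htri : ‖x - d‖ ≤ ‖x - xb‖ + ‖d - xb‖ := by
      simpa only [dist_eq_norm] using dist_triangle_right x d xb
    linarith
  have hfactor : (1 + K) * ‖x - xb‖ ≤ max 1 c * (1 + K) * ‖x - xb‖ := by
    rw [mul_assoc]
    exact le_mul_of_one_le_left ((norm_nonneg _).trans hxd) (le_max_left 1 c)
  have hc : c * ‖x - d‖ ≤ max 1 c * (1 + K) * ‖x - xb‖ := by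
    rw [mul_assoc]
    gcongr
    exact le_max_right 1 c
  have hx := norm_nonneg (x - xb)
  refine max_le (max_le ?_ ?_) (max_le hc ?_) <;> linarith

variable [NormedSpace ℝ E] {g : E → E} {lam ℓ : ℝ}

theorem norm_forwardStep_sub_forwardStep_le (q : E) (hlam : 0 ≤ lam) {x y : E}
    (hg : ‖g x - g y‖ ≤ ℓ * ‖x - y‖) :
    ‖forwardStep g q lam x - forwardStep g q lam y‖ ≤ (1 + lam * ℓ) * ‖x - y‖ :=
  calc ‖forwardStep g q lam x - forwardStep g q lam y‖
      = ‖(x - y) - lam • (g x - g y)‖ := by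
        congr 1
        simp only [forwardStep, smul_sub]
        abel
    _ ≤ ‖x - y‖ + lam * ‖g x - g y‖ := by
        simpa only [norm_smul_of_nonneg hlam] using norm_sub_le (x - y) (lam • (g x - g y))
    _ ≤ ‖x - y‖ + lam * (ℓ * ‖x - y‖) := by gcongr
    _ = (1 + lam * ℓ) * ‖x - y‖ := by ring

theorem mapsTo_forwardStep_closedBall (q : E) (hlam : 0 ≤ lam) (hℓ : 0 ≤ ℓ) {xb : E} {δ : ℝ}
    (hg : ∀ x ∈ closedBall xb δ, ‖g x - g xb‖ ≤ ℓ * ‖x - xb‖) :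
    Set.MapsTo (forwardStep g q lam) (closedBall xb δ)
      (closedBall (forwardStep g q lam xb) ((1 + lam * ℓ) * δ)) := by
  intro x hx
  rw [mem_closedBall_iff_norm]
  refine (norm_forwardStep_sub_forwardStep_le q hlam (hg x hx)).trans ?_
  gcongr
  exact mem_closedBall_iff_norm.mp hx

theorem stmt_13_general {F : E → Set E} {q xb : E} {s : E → E} {δ ℓs : ℝ}
    (hlam : 0 < lam) (hℓ : 0 ≤ ℓ) (hℓs : 0 ≤ ℓs)
    (hg : ∀ x ∈ closedBall xb δ, ‖g x - g xb‖ ≤ ℓ * ‖x - xb‖)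
    (hsxb : s (forwardStep g q lam xb) = xb)
    (hs : ∀ w ∈ closedBall (forwardStep g q lam xb) ((1 + lam * ℓ) * δ),
      ‖s w - s (forwardStep g q lam xb)‖ ≤ ℓs * ‖w - forwardStep g q lam xb‖)
    (hsel : IsResolventSelectionOn F lam s
      (closedBall (forwardStep g q lam xb) ((1 + lam * ℓ) * δ)))
    {x : E} (hx : x ∈ closedBall xb δ) :
    (1 / lam) • (x - s (forwardStep g q lam x)) - g x + q ∈ F (s (forwardStep g q lam x)) ∧
      max (max ‖x - xb‖ ‖s (forwardStep g q lam x) - xb‖)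
          (max ((1 / lam) * ‖x - s (forwardStep g q lam x)‖) ‖x - s (forwardStep g q lam x)‖) ≤
        max 1 (1 / lam) * (1 + ℓs * (1 + lam * ℓ)) * ‖x - xb‖ := by
  have hw := mapsTo_forwardStep_closedBall q hlam.le hℓ hg hx
  refine ⟨hsel.residual_mem hlam.ne' hw, max_norm_sub_le_of_norm_sub_le (1 / lam) ?_⟩
  calc ‖s (forwardStep g q lam x) - xb‖
      ≤ ℓs * ‖forwardStep g q lam x - forwardStep g q lam xb‖ := by
        simpa only [hsxb] using hs _ hw
    _ ≤ ℓs * ((1 + lam * ℓ) * ‖x - xb‖) := by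
        gcongr
        exact norm_forwardStep_sub_forwardStep_le q hlam.le (hg x hx)
    _ = ℓs * (1 + lam * ℓ) * ‖x - xb‖ := (mul_assoc _ _ _).symm

end Norm

/-- The approximation step via a Lipschitz selection of the resolvent
(Proposition 7.1 / `propApprox`). -/
theorem stmt_13 (n : ℕ) (lam δ ℓg ℓs : ℝ) (hlam : 0 < lam) (hδ : 0 < δ)
    (hℓg : 0 ≤ ℓg) (hℓs : 0 ≤ ℓs)
    (F : EuclideanSpace ℝ (Fin n) → Set (EuclideanSpace ℝ (Fin n)))
    (g : EuclideanSpace ℝ (Fin n) → EuclideanSpace ℝ (Fin n))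
    (q xb : EuclideanSpace ℝ (Fin n))
    (s : EuclideanSpace ℝ (Fin n) → EuclideanSpace ℝ (Fin n))
    (wb : EuclideanSpace ℝ (Fin n)) (hwb : wb = xb - lam • g xb + lam • q)
    (hg : ∀ x ∈ closedBall xb δ, ∀ u ∈ closedBall xb δ, ‖g x - g u‖ ≤ ℓg * ‖x - u‖)
    (hswb : s wb = xb)
    (hs : ∀ w ∈ closedBall wb ((1 + lam * ℓg) * δ),
      ∀ w' ∈ closedBall wb ((1 + lam * ℓg) * δ), ‖s w - s w'‖ ≤ ℓs * ‖w - w'‖)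
    (hsel : ∀ w ∈ closedBall wb ((1 + lam * ℓg) * δ), (1 / lam) • (w - s w) ∈ F (s w)) :
    ∃ η > 0, ∀ x ∈ closedBall xb δ,
      ((1 / lam) • (x - s (x - lam • g x + lam • q)) - g x + q
          ∈ F (s (x - lam • g x + lam • q))) ∧
      max (max ‖x - xb‖ ‖s (x - lam • g x + lam • q) - xb‖)
          (max ((1 / lam) * ‖x - s (x - lam • g x + lam • q)‖)
            ‖x - s (x - lam • g x + lam • q)‖) ≤ η * ‖x - xb‖ := by
  subst hwb
  exact ⟨max 1 (1 / lam) * (1 + ℓs * (1 + lam * ℓg)), by positivity, fun x hx =>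
    stmt_13_general hlam hℓg hℓs (fun u hu => hg u hu xb (mem_closedBall_self hδ.le)) hswb
      (fun w hw => hs w hw _ (mem_closedBall_self (by positivity))) hsel hx⟩
end
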